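/- arXiv:2411.17889 — 2 statements merged into one kernel-verified Lean document; each statement's English description precedes it below -/
import Mathlib

section
/- Let L be a finite relational first-order language and let F be a Fraïssé class of L-structures containing structures of arbitrarily large finite cardinality (equivalently, whose Fraïssé limit is infinite). Then there exists an ultrahomogeneous L-structure of cardinality ℵ₁ whose age equals F. -/
open FirstOrder Language Cardinal CategoryTheory

/-!
The countable Fraïssé limit `M` of `K` is the union of a chain in `K` in which every isomorphism
between substructures of one term is extended to the whole of that term inside the next; a finite
structure has only finitely many such partial maps, so they can be amalgamated one after another.

To pass to larger cardinals, choose for all tuples `a` and `b` of the same atomic type an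
automorphism `τ a b` of `M` taking `a` to `b`, and add `(a, b, x) ↦ τ a b x` to the language as new
functions. Since there are only finitely many atomic formulas in a given finite set of variables,
having the same atomic type is first-order definable, and so is the fact that `τ` names
automorphisms as required. It therefore survives in a model of any infinite cardinality of the
theory of the expansion of `M`, which is then ultrahomogeneous as well. The age is also preserved,
because a single formula describes the atomic type of a finite tuple.
-/

universe u v w w'

section AtomicTypes

open Structure

variable {L : FirstOrder.Language.{u, v}} {M : Type w} {N : Type w'} [L.Structure M] [L.Structure N]
  {ι κ : Type*}

variable (L) in
/-- Two tuples, possibly in different structures, have the same atomic type if they satisfy the same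
atomic formulas. -/
def SameAtomicType (a : ι → M) (b : ι → N) : Prop :=
  ∀ φ : L.Formula ι, φ.IsAtomic → (φ.Realize a ↔ φ.Realize b)

namespace SameAtomicType

variable {a : ι → M} {b : ι → N}

theorem symm (h : SameAtomicType L a b) : SameAtomicType L b a :=
  fun φ hφ => (h φ hφ).symm

theorem trans {P : Type*} [L.Structure P] {c : ι → P} (hab : SameAtomicType L a b)
    (hbc : SameAtomicType L b c) : SameAtomicType L a c :=
  fun φ hφ => (hab φ hφ).trans (hbc φ hφ)

theorem realize_eq_iff (h : SameAtomicType L a b) (s t : L.Term ι) :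
    s.realize a = t.realize a ↔ s.realize b = t.realize b := by
  simpa only [Formula.realize_equal] using h (s.equal t) (.equal _ _)

theorem map_embedding (a : ι → M) (f : M ↪[L] N) : SameAtomicType L a (f ∘ a) := fun φ hφ => by
  have h := hφ.isQF.realize_embedding f (v := a) (xs := default)
  rwa [Subsingleton.elim (f ∘ default) default, Iff.comm] at h

theorem realize_term (h : SameAtomicType L a b) (t : κ → L.Term ι) :
    SameAtomicType L (fun k => (t k).realize a) (fun k => (t k).realize b) := fun φ hφ => by
  have hsubst : (φ.subst t).IsAtomic := by
    cases hφ with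
    | equal s₁ s₂ => exact .equal _ _
    | rel R ts => exact .rel _ _
  simpa only [Formula.Realize, BoundedFormula.realize_subst] using h _ hsubst

end SameAtomicType

/-- A map preserving atomic types of finite tuples, as an embedding. -/
def embeddingOfSameAtomicType (f : M → N)
    (hf : ∀ (n : ℕ) (x : Fin n → M), SameAtomicType L x (f ∘ x)) : M ↪[L] N where
  toFun := f
  inj' x y hxy := by
    simpa [hxy] using (hf 2 ![x, y]).realize_eq_iff (Term.var 0) (Term.var 1)
  map_fun' {n} F x := by
    have hgraph := hf (n + 1) (Fin.cons (funMap F x) x) _ (Formula.isAtomic_graph F)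
    rw [Fin.comp_cons, Formula.realize_graph, Formula.realize_graph] at hgraph
    exact (hgraph.1 rfl).symm
  map_rel' {n} R x := by
    have hrel := hf n x (R.formula Term.var) (.rel _ _)
    exact Formula.realize_rel.symm.trans (hrel.symm.trans Formula.realize_rel)

theorem mem_closure_range_iff_exists_term {a : ι → M} {x : M} :
    x ∈ Substructure.closure L (Set.range a) ↔ ∃ t : L.Term ι, t.realize a = x := by
  rw [Substructure.mem_closure_iff_exists_term]
  constructor
  · rintro ⟨t, rfl⟩
    choose i hi using fun y : Set.range a => y.2
    exact ⟨t.relabel i, by rw [Term.realize_relabel]; congr 1; exact funext hi⟩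
  · rintro ⟨t, rfl⟩
    exact ⟨t.relabel (Set.rangeFactorization a), by rw [Term.realize_relabel]; rfl⟩

theorem SameAtomicType.exists_embedding_closure_range {a : ι → M} {b : ι → N}
    (h : SameAtomicType L a b) :
    ∃ f : Substructure.closure L (Set.range a) ↪[L] N,
      ∀ i, f ⟨a i, Substructure.subset_closure (Set.mem_range_self i)⟩ = b i := by
  choose t ht using fun x : Substructure.closure L (Set.range a) =>
    mem_closure_range_iff_exists_term.1 x.2
  refine ⟨embeddingOfSameAtomicType (fun x => (t x).realize b) fun n x => ?_, fun i => ?_⟩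
  · refine (map_embedding x (Substructure.subtype _)).trans ?_
    have hx : Substructure.subtype _ ∘ x = fun k => (t (x k)).realize a :=
      funext fun k => (ht (x k)).symm
    rw [hx]
    exact h.realize_term (t ∘ x)
  · exact (h.realize_eq_iff _ (Term.var i)).1 (ht _)

theorem isUltrahomogeneous_iff_exists_equiv :
    L.IsUltrahomogeneous M ↔ ∀ (n : ℕ) (a b : Fin n → M), SameAtomicType L a b →
      ∃ g : M ≃[L] M, ∀ i, g (a i) = b i := by
  constructor
  · intro hM n a b hab
    obtain ⟨f, hf⟩ := hab.exists_embedding_closure_range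
    obtain ⟨g, rfl⟩ := hM _ (Substructure.fg_closure (Set.finite_range a)) f
    exact ⟨g, hf⟩
  · intro hM S hS f
    obtain ⟨n, a, rfl⟩ := Substructure.fg_iff_exists_fin_generating_family.1 hS
    let a' (i : Fin n) : Substructure.closure L (Set.range a) :=
      ⟨a i, Substructure.subset_closure (Set.mem_range_self i)⟩
    obtain ⟨g, hg⟩ := hM n a (f ∘ a') <|
      (SameAtomicType.map_embedding a' (Substructure.subtype _)).symm.trans (.map_embedding a' f)
    refine ⟨g, Embedding.ext fun ⟨x, hx⟩ => ?_⟩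
    obtain ⟨t, rfl⟩ := mem_closure_range_iff_exists_term.1 hx
    have ht : (⟨t.realize a, hx⟩ : Substructure.closure L (Set.range a)) = t.realize a' :=
      Subtype.ext (HomClass.realize_term (Substructure.subtype _) (v := a'))
    calc f ⟨t.realize a, hx⟩ = t.realize (f ∘ a') := by rw [ht, HomClass.realize_term]
      _ = t.realize (g ∘ a) := congrArg (t.realize ·) (funext fun i => (hg i).symm)
      _ = g (t.realize a) := HomClass.realize_term g

variable (L) in
/-- The atomic formulas with free variables in `ι`, as a type over which to form conjunctions. -/
abbrev AtomicFormula (ι : Type*) := {φ : L.Formula ι // φ.IsAtomic}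

instance AtomicFormula.finite [L.IsRelational] [Finite L.Symbols] [Finite ι] :
    Finite (AtomicFormula L ι) := by
  have : Finite (Σ n, L.Relations n) :=
    Finite.of_injective (Sum.inr : _ → L.Symbols) Sum.inr_injective
  have hvar : Function.Surjective (Term.var : ι ⊕ Fin 0 → L.Term (ι ⊕ Fin 0)) := by
    rintro (x | ⟨F, _⟩)
    exacts [⟨x, rfl⟩, isEmptyElim F]
  have := Finite.of_surjective _ hvar
  let atomic : (L.Term (ι ⊕ Fin 0) × L.Term (ι ⊕ Fin 0)) ⊕
      (Σ R : Σ n, L.Relations n, Fin R.1 → L.Term (ι ⊕ Fin 0)) → AtomicFormula L ι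
    | .inl (s, t) => ⟨_, .equal s t⟩
    | .inr ⟨R, ts⟩ => ⟨_, .rel R.2 ts⟩
  refine Finite.of_surjective atomic ?_
  rintro ⟨_, hφ⟩
  cases hφ with
  | equal s t => exact ⟨.inl (s, t), rfl⟩
  | rel R ts => exact ⟨.inr ⟨⟨_, R⟩, ts⟩, rfl⟩

section Formulas

variable [Finite (AtomicFormula L ι)]

open Classical in
/-- The conjunction of all atomic and negated atomic formulas that hold for the tuple `a`. -/
noncomputable def atomicTypeFormula (a : ι → M) : L.Formula ι :=
  Formula.iInf fun φ : AtomicFormula L ι => if φ.1.Realize a then φ.1 else φ.1.not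

theorem realize_atomicTypeFormula {a : ι → M} {b : ι → N} :
    (atomicTypeFormula a : L.Formula ι).Realize b ↔ SameAtomicType L a b := by
  simp only [atomicTypeFormula, Formula.realize_iInf, SameAtomicType, Subtype.forall]
  refine forall₂_congr fun φ _ => ?_
  split_ifs with ha <;> simp [ha]

variable (L ι) in
/-- The formula expressing that the two halves of a tuple have the same atomic type. -/
noncomputable def sameAtomicTypeFormula : L.Formula (ι ⊕ ι) :=
  Formula.iInf fun φ : AtomicFormula L ι => (φ.1.relabel Sum.inl).iff (φ.1.relabel Sum.inr)

theorem realize_sameAtomicTypeFormula {v : ι ⊕ ι → M} :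
    (sameAtomicTypeFormula L ι).Realize v ↔ SameAtomicType L (v ∘ Sum.inl) (v ∘ Sum.inr) := by
  simp only [sameAtomicTypeFormula, Formula.realize_iInf, Formula.realize_iff,
    Formula.realize_relabel, SameAtomicType, Subtype.forall]

end Formulas

end AtomicTypes

section ElementaryEquivalence

variable {L : FirstOrder.Language.{u, v}} {M : Type w} {N : Type w'} [L.Structure M] [L.Structure N]
  {ι : Type*} [Finite ι]

theorem exists_realize_iff_of_elementarilyEquivalent (h : M ≅[L] N) (φ : L.Formula ι) :
    (∃ v : ι → M, φ.Realize v) ↔ ∃ v : ι → N, φ.Realize v := by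
  have hφ := elementarilyEquivalent_iff.1 h (Formula.iExs ι (φ.relabel (Sum.inr : ι → Empty ⊕ ι)))
  simpa only [Sentence.Realize, Formula.realize_iExs, Formula.realize_relabel, Sum.elim_comp_inr]
    using hφ

theorem forall_realize_iff_of_elementarilyEquivalent (h : M ≅[L] N) (φ : L.Formula ι) :
    (∀ v : ι → M, φ.Realize v) ↔ ∀ v : ι → N, φ.Realize v := by
  have hφ := elementarilyEquivalent_iff.1 h (Formula.iAlls ι (φ.relabel (Sum.inr : ι → Empty ⊕ ι)))
  simpa only [Sentence.Realize, Formula.realize_iAlls, Formula.realize_relabel, Sum.elim_comp_inr]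
    using hφ

theorem elementarilyEquivalent_of_isExpansionOn {L' : FirstOrder.Language}
    [L'.Structure M] [L'.Structure N] (φ : L →ᴸ L') [φ.IsExpansionOn M] [φ.IsExpansionOn N]
    (h : M ≅[L'] N) : M ≅[L] N :=
  elementarilyEquivalent_iff.2 fun ψ => by
    rw [← φ.realize_onSentence M, ← φ.realize_onSentence N, elementarilyEquivalent_iff.1 h]

end ElementaryEquivalence

theorem age_subset_of_elementarilyEquivalent {L : FirstOrder.Language.{u, v}}
    [∀ n, Finite (AtomicFormula L (Fin n))] {M N : Type w} [L.Structure M] [L.Structure N]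
    (h : M ≅[L] N) : L.age M ⊆ L.age N := by
  rintro P ⟨hP, ⟨f⟩⟩
  obtain ⟨n, s, hs⟩ := Substructure.fg_iff_exists_fin_generating_family.1 hP.1
  have hM : ∃ v : Fin n → M, (atomicTypeFormula s : L.Formula (Fin n)).Realize v :=
    ⟨f ∘ s, realize_atomicTypeFormula.2 (.map_embedding s f)⟩
  obtain ⟨v, hv⟩ := (exists_realize_iff_of_elementarilyEquivalent h _).1 hM
  obtain ⟨g, -⟩ := (realize_atomicTypeFormula.1 hv).exists_embedding_closure_range
  rw [hs] at g
  exact ⟨hP, ⟨g.comp Substructure.topEquiv.symm.toEmbedding⟩⟩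

section Transport

variable {L : FirstOrder.Language.{u, v}} {M : Type w} [L.Structure M]

variable (L) in
/-- A transport on `M` is a choice, for all tuples `a` and `b` of the same length, of a surjective
self-map `τ n a b` of `M` preserving atomic types, that is, of an automorphism, which takes `a` to
`b` whenever `a` and `b` have the same atomic type. If they do not, then `τ n a b` is an arbitrary
automorphism, so that `τ` is total and can interpret function symbols. -/
structure IsTransport (τ : ∀ n, (Fin n → M) → (Fin n → M) → M → M) : Prop where
  apply_tuple : ∀ n (a b : Fin n → M), SameAtomicType L a b → ∀ i, τ n a b (a i) = b i
  sameAtomicType : ∀ n (a b : Fin n → M) k (x : Fin k → M), SameAtomicType L x (τ n a b ∘ x)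
  surjective : ∀ n (a b : Fin n → M), Function.Surjective (τ n a b)

theorem isUltrahomogeneous_iff_exists_isTransport :
    L.IsUltrahomogeneous M ↔ ∃ τ, IsTransport (M := M) L τ := by
  rw [isUltrahomogeneous_iff_exists_equiv]
  constructor
  · intro hM
    have hg : ∀ n (a b : Fin n → M), ∃ g : M ≃[L] M, SameAtomicType L a b → ∀ i, g (a i) = b i := by
      intro n a b
      by_cases hab : SameAtomicType L a b
      · obtain ⟨g, hg⟩ := hM n a b hab
        exact ⟨g, fun _ => hg⟩
      · exact ⟨.refl L M, fun h => (hab h).elim⟩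
    choose g hg using hg
    exact ⟨fun n a b => g n a b, hg, fun n a b _ x => .map_embedding x (g n a b).toEmbedding,
      fun n a b => (g n a b).surjective⟩
  · rintro ⟨τ, hτ⟩ n a b hab
    let e := embeddingOfSameAtomicType (τ n a b) (hτ.sameAtomicType n a b)
    let g : M ≃[L] M :=
      { Equiv.ofBijective (τ n a b) ⟨e.injective, hτ.surjective n a b⟩ with
        map_fun' := e.map_fun'
        map_rel' := e.map_rel' }
    exact ⟨g, hτ.apply_tuple n a b hab⟩

end Transport

section TransportLanguage

/-- The function symbols naming a transport: one symbol for each length `n` of tuples, taking two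
`n`-tuples and a point. -/
inductive TransportFunctions : ℕ → Type
  | transport (n : ℕ) : TransportFunctions (n + n + 1)

/-- The language with the function symbols of a transport and no relation symbols. -/
def transportLang : FirstOrder.Language.{0, 0} := ⟨TransportFunctions, fun _ => Empty⟩

theorem card_transportLang_le : transportLang.card ≤ ℵ₀ := by
  have hfun : Function.Surjective fun n =>
      (⟨_, TransportFunctions.transport n⟩ : Σ n, transportLang.Functions n) := by
    rintro ⟨_, ⟨n⟩⟩
    exact ⟨n, rfl⟩
  have : Countable (Σ n, transportLang.Functions n) := hfun.countable
  have : IsEmpty (Σ n, transportLang.Relations n) := ⟨fun R => R.2.elim⟩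
  exact mk_le_aleph0

variable {L : FirstOrder.Language.{u, v}} {M : Type w}

variable (L) in
/-- The expansion of `L` by the function symbols of a transport. -/
abbrev withTransport : FirstOrder.Language := L.sum transportLang

section Expansion

variable [(withTransport L).Structure M]

variable (L) in
/-- The interpretation of the function symbols of `transportLang`, as a function of two tuples and a
point. -/
def transportMap (n : ℕ) (a b : Fin n → M) (x : M) : M :=
  Structure.funMap (L := withTransport L) (Sum.inr (.transport n))
    (Fin.snoc (α := fun _ => M) (Fin.append a b) x)

/-- The term applying the transport from `s` to `t` at `x`. -/
def transportTerm {α : Type*} {n : ℕ} (s t : Fin n → (withTransport L).Term α)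
    (x : (withTransport L).Term α) : (withTransport L).Term α :=
  Term.func (Sum.inr (.transport n))
    (Fin.snoc (α := fun _ => (withTransport L).Term α) (Fin.append s t) x)

theorem realize_transportTerm {α : Type*} {n : ℕ} (s t : Fin n → (withTransport L).Term α)
    (x : (withTransport L).Term α) (v : α → M) :
    (transportTerm s t x).realize v =
      transportMap L n (fun i => (s i).realize v) (fun i => (t i).realize v) (x.realize v) := by
  have happend : Term.realize v ∘ Fin.append s t =
      Fin.append (fun i => (s i).realize v) (fun i => (t i).realize v) :=
    funext fun i => by
      cases i using Fin.addCases <;>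
        simp only [Function.comp_apply, Fin.append_left, Fin.append_right]
  exact congrArg (Structure.funMap _) <|
    (Fin.comp_snoc (Term.realize v) _ _).trans (by rw [happend])

variable (L) in
/-- The formula in `v = (a, b)` expressing that, if `a` and `b` have the same atomic type, then the
transport from `a` to `b` sends `a i` to `b i`. -/
noncomputable def applyTupleFormula {n : ℕ} [Finite (AtomicFormula L (Fin n))] (i : Fin n) :
    (withTransport L).Formula (Fin n ⊕ Fin n) :=
  (LHom.sumInl.onFormula (sameAtomicTypeFormula L (Fin n))).imp <|
    (transportTerm (fun i => .var (.inl i)) (fun i => .var (.inr i)) (.var (.inl i))).equal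
      (.var (.inr i))

variable (L) in
/-- The formula in `v = (a, b, x)` expressing that the tuple `x` has the same atomic type as its
image under the transport from `a` to `b`. -/
noncomputable def transportTypeFormula (n k : ℕ) [Finite (AtomicFormula L (Fin k))] :
    (withTransport L).Formula ((Fin n ⊕ Fin n) ⊕ Fin k) :=
  (LHom.sumInl.onFormula (sameAtomicTypeFormula L (Fin k))).subst <|
    Sum.elim (fun j => .var (.inr j)) fun j =>
      transportTerm (fun i => .var (.inl (.inl i))) (fun i => .var (.inl (.inr i))) (.var (.inr j))

variable (L) in
/-- The formula in `v = (a, b, y)` expressing that the point `y` is in the range of the transport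
from `a` to `b`. -/
noncomputable def transportSurjFormula (n : ℕ) :
    (withTransport L).Formula ((Fin n ⊕ Fin n) ⊕ Unit) :=
  Formula.iExs Unit <|
    (transportTerm (fun i => .var (.inl (.inl (.inl i)))) (fun i => .var (.inl (.inl (.inr i))))
      (.var (.inr ()))).equal (.var (.inl (.inr ())))

theorem realize_transportSurjFormula {n : ℕ} {v : (Fin n ⊕ Fin n) ⊕ Unit → M} :
    (transportSurjFormula L n).Realize v ↔
      ∃ x, transportMap L n (v ∘ .inl ∘ .inl) (v ∘ .inl ∘ .inr) x = v (.inr ()) := by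
  simp only [transportSurjFormula, Formula.realize_iExs, Formula.realize_equal,
    realize_transportTerm]
  exact (Equiv.funUnique Unit M).exists_congr_left

variable [L.Structure M] [(LHom.sumInl : L →ᴸ withTransport L).IsExpansionOn M]

theorem realize_applyTupleFormula {n : ℕ} [Finite (AtomicFormula L (Fin n))] {i : Fin n}
    {v : Fin n ⊕ Fin n → M} :
    (applyTupleFormula L i).Realize v ↔ (SameAtomicType L (v ∘ .inl) (v ∘ .inr) →
      transportMap L n (v ∘ .inl) (v ∘ .inr) (v (.inl i)) = v (.inr i)) := by
  simp only [applyTupleFormula, Formula.realize_imp, LHom.realize_onFormula,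
    realize_sameAtomicTypeFormula, Formula.realize_equal, realize_transportTerm]
  rfl

theorem realize_transportTypeFormula {n k : ℕ} [Finite (AtomicFormula L (Fin k))]
    {v : (Fin n ⊕ Fin n) ⊕ Fin k → M} :
    (transportTypeFormula L n k).Realize v ↔ SameAtomicType L (v ∘ .inr)
      (transportMap L n (v ∘ .inl ∘ .inl) (v ∘ .inl ∘ .inr) ∘ v ∘ .inr) := by
  rw [transportTypeFormula, Formula.Realize, BoundedFormula.realize_subst]
  refine (LHom.realize_onFormula _ _).trans ?_
  simp only [realize_sameAtomicTypeFormula, Function.comp_def, Sum.elim_inl, Sum.elim_inr,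
    realize_transportTerm, Term.realize]

variable [∀ n, Finite (AtomicFormula L (Fin n))]

theorem isTransport_transportMap_iff :
    IsTransport L (transportMap (M := M) L) ↔
      (∀ n (i : Fin n) (v : _ → M), (applyTupleFormula L i).Realize v) ∧
      (∀ n k (v : _ → M), (transportTypeFormula L n k).Realize v) ∧
      ∀ n (v : _ → M), (transportSurjFormula L n).Realize v := by
  simp only [realize_applyTupleFormula, realize_transportTypeFormula, realize_transportSurjFormula]
  constructor
  · intro h
    exact ⟨fun n i v hv => h.apply_tuple n _ _ hv i, fun n k v => h.sameAtomicType n _ _ k _,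
      fun n v => h.surjective n _ _ _⟩
  · rintro ⟨htuple, htype, hsurj⟩
    exact ⟨fun n a b hab i => htuple n i (Sum.elim a b) hab,
      fun n a b k x => htype n k (Sum.elim (Sum.elim a b) x),
      fun n a b y => hsurj n (Sum.elim (Sum.elim a b) fun _ => y)⟩

theorem IsTransport.of_elementarilyEquivalent {N : Type w'} [L.Structure N]
    [(withTransport L).Structure N] [(LHom.sumInl : L →ᴸ withTransport L).IsExpansionOn N]
    (hM : IsTransport L (transportMap (M := M) L)) (h : M ≅[withTransport L] N) :
    IsTransport L (transportMap (M := N) L) := by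
  rw [isTransport_transportMap_iff] at hM ⊢
  simpa only [forall_realize_iff_of_elementarilyEquivalent h] using hM

end Expansion

variable [L.Structure M]

theorem exists_structure_transportMap_eq (τ : ∀ n, (Fin n → M) → (Fin n → M) → M → M) :
    ∃ _ : transportLang.Structure M, transportMap L = τ := by
  refine ⟨⟨fun {_} F => ?_, fun R => R.elim⟩, ?_⟩
  · obtain ⟨n⟩ := F
    exact fun v => τ n (fun i => v (.castSucc (.castAdd n i)))
      (fun i => v (.castSucc (.natAdd n i))) (v (.last _))
  · funext n a b x
    change τ n _ _ _ = _
    simp only [Fin.snoc_castSucc, Fin.snoc_last, Fin.append_left, Fin.append_right]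

variable (M) in
theorem exists_isUltrahomogeneous_card_eq [∀ n, Finite (AtomicFormula L (Fin n))] [Infinite M]
    (hM : L.IsUltrahomogeneous M) {κ : Cardinal.{w}} (hκ : ℵ₀ ≤ κ)
    (hL : lift.{w} L.card ≤ lift.{max u v} κ) :
    ∃ N : Bundled.{w} L.Structure, #N = κ ∧ L.IsUltrahomogeneous N ∧ L.age N = L.age M := by
  obtain ⟨τ, hτ⟩ := isUltrahomogeneous_iff_exists_isTransport.1 hM
  obtain ⟨_, rfl⟩ := exists_structure_transportMap_eq (L := L) τ
  have hcard : lift.{w} (withTransport L).card ≤ lift.{max u v} κ := by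
    have hT : lift.{w} (lift.{max u v} transportLang.card) ≤ lift.{max u v} κ := by
      rw [lift_lift]
      exact (lift_le_aleph0.2 card_transportLang_le).trans (aleph0_le_lift.2 hκ)
    rw [card_sum, lift_add, lift_lift]
    exact add_le_of_le (aleph0_le_lift.2 hκ) hL hT
  obtain ⟨N, hMN, hN⟩ := exists_elementarilyEquivalent_card_eq (withTransport L) M κ hκ hcard
  let : L.Structure N := (LHom.sumInl : L →ᴸ withTransport L).reduct N
  have : (LHom.sumInl : L →ᴸ withTransport L).IsExpansionOn N := LHom.isExpansionOn_reduct _ _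
  have hMN' := elementarilyEquivalent_of_isExpansionOn (LHom.sumInl : L →ᴸ withTransport L) hMN
  exact ⟨⟨N, inferInstance⟩, hN,
    isUltrahomogeneous_iff_exists_isTransport.2 ⟨_, hτ.of_elementarilyEquivalent hMN⟩,
    (age_subset_of_elementarilyEquivalent hMN'.symm).antisymm
      (age_subset_of_elementarilyEquivalent hMN')⟩

end TransportLanguage

section FraisseLimit

open Structure Substructure

variable {L : FirstOrder.Language.{u, v}}

theorem exists_comp_eq_of_range_le {A S M : Type*} [L.Structure A] [L.Structure S] [L.Structure M]
    {e : A ↪[L] M} {g : S ↪[L] M} (h : g.toHom.range ≤ e.toHom.range) :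
    ∃ g₀ : S ↪[L] A, e.comp g₀ = g := by
  let g' := g.codRestrict e.toHom.range fun s => h (g.toHom.mem_range_self s)
  refine ⟨e.equivRange.symm.toEmbedding.comp g', Embedding.ext fun s => ?_⟩
  calc e (e.equivRange.symm (g' s)) = e.equivRange (e.equivRange.symm (g' s)) :=
        (e.equivRange_apply _).symm
    _ = g s := by rw [Language.Equiv.apply_symm_apply]; rfl

/-- An embedding `j : A ↪[L] B` extends partial maps if every embedding of a substructure of `A`
into `A` extends to an embedding of the whole of `A`, once its values are moved to `B` by `j`. -/
def ExtendsPartialMaps {A B : Type*} [L.Structure A] [L.Structure B] (j : A ↪[L] B) : Prop :=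
  ∀ (S : L.Substructure A) (f : S ↪[L] A), ∃ h : A ↪[L] B, h.comp S.subtype = j.comp f

namespace ExtendsPartialMaps

variable {A B : Type*} [L.Structure A] [L.Structure B] {j : A ↪[L] B}

theorem embedding_comp {C : Type*} [L.Structure C] (hj : ExtendsPartialMaps j) (k : B ↪[L] C) :
    ExtendsPartialMaps (k.comp j) := fun S f => by
  obtain ⟨h, hh⟩ := hj S f
  exact ⟨k.comp h, by rw [Embedding.comp_assoc, hh, Embedding.comp_assoc]⟩

theorem exists_comp_eq {S : Type*} [L.Structure S] (hj : ExtendsPartialMaps j) (s g : S ↪[L] A) :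
    ∃ h : A ↪[L] B, h.comp s = j.comp g := by
  obtain ⟨h, hh⟩ := hj s.toHom.range (g.comp s.equivRange.symm.toEmbedding)
  refine ⟨h, Embedding.ext fun x => ?_⟩
  calc h (s x) = j (g (s.equivRange.symm (s.equivRange x))) :=
        DFunLike.congr_fun hh (s.equivRange x)
    _ = j (g x) := by rw [Language.Equiv.symm_apply_apply]

end ExtendsPartialMaps

theorem exists_extendsPartialMaps {K : Set (Bundled.{w} L.Structure)} (hher : Hereditary K)
    (hamalg : Amalgamation K) {A : Bundled.{w} L.Structure} (hA : A ∈ K) [Finite A] :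
    ∃ B ∈ K, ∃ j : A ↪[L] B, ExtendsPartialMaps j := by
  have : Finite (L.Substructure A) := .of_injective _ SetLike.coe_injective
  have : Finite (Σ S : L.Substructure A, S ↪[L] A) :=
    have (S : L.Substructure A) : Finite (S ↪[L] A) := .of_injective _ DFunLike.coe_injective
    inferInstance
  have hset (t : Set (Σ S : L.Substructure A, S ↪[L] A)) : ∃ B ∈ K, ∃ j : A ↪[L] B,
      ∀ p ∈ t, ∃ h : A ↪[L] B, h.comp p.1.subtype = j.comp p.2 := by
    induction t, t.toFinite using Set.Finite.induction_on with
    | empty => exact ⟨A, hA, .refl L A, by simp⟩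
    | @insert p t _ _ ih =>
      obtain ⟨B, hB, j, hj⟩ := ih
      have hS : Bundled.mk p.1 ∈ K := hher A hA ⟨Structure.FG.of_finite, ⟨p.1.subtype⟩⟩
      obtain ⟨C, g, k, hC, hcomm⟩ :=
        hamalg ⟨p.1, inferInstance⟩ A B p.1.subtype (j.comp p.2) hS hA hB
      refine ⟨C, hC, k.comp j, ?_⟩
      rintro q (rfl | hq)
      · exact ⟨g, hcomm.trans (Embedding.comp_assoc ..).symm⟩
      · obtain ⟨h, hh⟩ := hj q hq
        exact ⟨k.comp h, by rw [Embedding.comp_assoc, hh, Embedding.comp_assoc]⟩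
  obtain ⟨B, hB, j, hj⟩ := hset Set.univ
  exact ⟨B, hB, j, fun S f => hj ⟨S, f⟩ (Set.mem_univ _)⟩

theorem isExtensionPair_directLimit {ι : Type*} [Preorder ι] [IsDirectedOrder ι] [Nonempty ι]
    {G : ι → Type*} [∀ i, L.Structure (G i)] {f : ∀ i j, i ≤ j → G i ↪[L] G j}
    [DirectedSystem G fun i j h => f i j h]
    (hf : ∀ i, ∃ (j : ι) (hij : i ≤ j), ExtendsPartialMaps (f i j hij)) :
    L.IsExtensionPair (Language.DirectLimit G f) (Language.DirectLimit G f) := by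
  rw [isExtensionPair_iff_exists_embedding_closure_singleton_sup]
  intro S hS g m
  have hfg : (closure L {m} ⊔ S ⊔ g.toHom.range).FG :=
    ((fg_closure_singleton m).sup hS).sup (((fg_iff_structure_fg S).1 hS).range g.toHom)
  obtain ⟨i, T, hT⟩ := DirectLimit.exists_fg_substructure_in_Sigma _ hfg
  let e := DirectLimit.of L ι G f i
  have hle : closure L {m} ⊔ S ⊔ g.toHom.range ≤ e.toHom.range := hT ▸ Hom.map_le_range
  obtain ⟨t, -⟩ := exists_comp_eq_of_range_le (e := e) (g := (closure L {m} ⊔ S).subtype)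
    (by rw [range_subtype]; exact le_sup_left.trans hle)
  obtain ⟨g₀, hg₀⟩ := exists_comp_eq_of_range_le (le_sup_right.trans hle)
  obtain ⟨j, hij, hj⟩ := hf i
  obtain ⟨h, hh⟩ := hj.exists_comp_eq (t.comp (inclusion le_sup_right)) g₀
  refine ⟨(DirectLimit.of L ι G f j).comp (h.comp t), ?_⟩
  ext s
  calc g s = DirectLimit.of L ι G f i (g₀ s) := (DFunLike.congr_fun hg₀ s).symm
    _ = DirectLimit.of L ι G f j (f i j hij (g₀ s)) := DirectLimit.of_f.symm
    _ = DirectLimit.of L ι G f j (h (t (inclusion le_sup_right s))) :=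
      congrArg _ (DFunLike.congr_fun hh s).symm

theorem exists_seq_forall_nonempty_embedding {K : Set (Bundled.{w} L.Structure)} (hne : K.Nonempty)
    (hc : (Quotient.mk' '' K).Countable) : ∃ F : ℕ → Bundled.{w} L.Structure,
      (∀ n, F n ∈ K) ∧ ∀ B ∈ K, ∃ n, Nonempty (B ↪[L] F n) := by
  obtain ⟨F, hF⟩ := hc.exists_eq_range (hne.image _)
  choose G hGK hG using fun n => (hF ▸ Set.mem_range_self n : F n ∈ Quotient.mk' '' K)
  refine ⟨G, hGK, fun B hB => ?_⟩
  obtain ⟨n, hn⟩ := (hF ▸ Set.mem_image_of_mem _ hB : Quotient.mk' B ∈ Set.range F)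
  obtain ⟨g⟩ := Quotient.exact ((hG n).trans hn)
  exact ⟨n, ⟨g.symm.toEmbedding⟩⟩

theorem exists_cg_isUltrahomogeneous_age_eq (K : Set (Bundled.{w} L.Structure)) [hK : IsFraisse K]
    (hfin : ∀ A ∈ K, Finite A) : ∃ M : Bundled.{w} L.Structure,
      Structure.CG L M ∧ L.IsUltrahomogeneous M ∧ L.age M = K := by
  obtain ⟨F, hFK, hF⟩ :=
    exists_seq_forall_nonempty_embedding hK.is_nonempty hK.is_essentially_countable
  have hstep (A : K) (n : ℕ) : ∃ (B : K) (j : A.1 ↪[L] B.1),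
      ExtendsPartialMaps j ∧ Nonempty (F n ↪[L] B.1) := by
    have := hfin A A.2
    obtain ⟨B, hB, j, hj⟩ := exists_extendsPartialMaps hK.hereditary hK.amalgamation A.2
    obtain ⟨C, hC, ⟨k⟩, hFC⟩ := hK.jointEmbedding B hB (F n) (hFK n)
    exact ⟨⟨C, hC⟩, k.comp j, hj.embedding_comp k, hFC⟩
  choose next j hj hnext using hstep
  let G : ℕ → K := fun n => n.rec ⟨F 0, hFK 0⟩ fun n A => next A n
  let f : ∀ m n, m ≤ n → (G m).1 ↪[L] (G n).1 := DirectedSystem.natLERec fun n => j (G n) n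
  have hf (n : ℕ) : f n (n + 1) n.le_succ = j (G n) n :=
    (Nat.leRec_succ' ..).trans (Embedding.comp_refl _)
  let M := Language.DirectLimit (fun n => (G n).1) f
  have hcg : Structure.CG L M := DirectLimit.cg _ fun n => (hK.FG _ (G n).2).cg
  refine ⟨.of M, hcg, ?_, ?_⟩
  · exact (isUltrahomogeneous_iff_IsExtensionPair hcg).2 <|
      isExtensionPair_directLimit fun n => ⟨n + 1, n.le_succ, (hf n).symm ▸ hj _ _⟩
  · refine (age_directLimit (fun n => (G n).1) f).trans <| Set.Subset.antisymm
      (Set.iUnion_subset fun n => hK.hereditary _ (G n).2) fun B hB => ?_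
    obtain ⟨n, ⟨e⟩⟩ := hF B hB
    obtain ⟨k⟩ := hnext (G n) n
    exact Set.mem_iUnion_of_mem (n + 1) ⟨hK.FG B hB, ⟨k.comp e⟩⟩

end FraisseLimit

theorem statement13_general {L : FirstOrder.Language.{u, v}} [L.IsRelational] [Finite L.Symbols]
    (K : Set (Bundled.{w} L.Structure)) [hK : IsFraisse K]
    (hlarge : ∀ n : ℕ, ∃ M ∈ K, (n : Cardinal) ≤ #M) {κ : Cardinal.{w}} (hκ : ℵ₀ ≤ κ) :
    ∃ N : Bundled.{w} L.Structure, #N = κ ∧ L.IsUltrahomogeneous N ∧ L.age N = K := by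
  obtain ⟨M, -, hM, rfl⟩ :=
    exists_cg_isUltrahomogeneous_age_eq K fun A hA => (hK.FG A hA).finite
  have : Infinite M := infinite_iff.2 <| aleph0_le.2 fun n => by
    obtain ⟨A, ⟨-, ⟨e⟩⟩, hA⟩ := hlarge n
    exact hA.trans (mk_le_of_injective e.injective)
  have hL : lift.{w} L.card ≤ lift.{max u v} κ :=
    (lift_le_aleph0.2 mk_le_aleph0).trans (aleph0_le_lift.2 hκ)
  exact exists_isUltrahomogeneous_card_eq M hM hκ hL

/-- If `K` is a Fraïssé class in a finite relational language containing
structures of arbitrarily large finite cardinality, then there exists an ultrahomogeneous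
structure of cardinality `ℵ₁` whose age is `K`. -/
theorem statement13 (L : FirstOrder.Language.{0, 0}) [L.IsRelational] [Finite L.Symbols]
    (K : Set (Bundled.{0} L.Structure)) [IsFraisse K]
    (hlarge : ∀ n : ℕ, ∃ M ∈ K, (n : Cardinal) ≤ #M) :
    ∃ N : Bundled.{0} L.Structure, #N = aleph 1 ∧
      L.IsUltrahomogeneous N ∧ L.age N = K :=
  statement13_general K hlarge (aleph0_le_aleph 1)
end

section
/- Let L be a countable first-order language, let F be a Fraïssé class of L-structures and let U be its Fraïssé limit. Assume U is ω-saturated: for every finite tuple ā of elements of U and every set p of L-formulas in one free variable with parameters from ā, if every finite subset of p is realized by some element of U, then p is realized by some element of U. Then the class of countable L-structures with age contained in F has the amalgamation property: for all countable L-structures X, Y, Z whose ages are contained in F and all embeddings f : Z → X, g : Z → Y, there exist a countable L-structure W with age contained in F and embeddings f' : X → W, g' : Y → W with f' ∘ f = g' ∘ g. -/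
open FirstOrder Language Cardinal CategoryTheory

/-!
The Fraïssé limit `U` is itself the amalgam. Finitely generated pieces of `X` and `Y` embed into `U`
compatibly with `f` and `g`, because the age of `U` has the amalgamation property. Along larger and
larger pieces these partial embeddings form a filter of assignments `X ⊕ Y → U`. Since `X ⊕ Y` is
countable, `ω`-saturation allows us to fix the values one variable at a time and produces a single
assignment satisfying every formula that holds eventually along the filter; such an assignment is a
pair of embeddings agreeing on `Z`.
-/

universe u v w

section ElementaryLimit

variable {L : FirstOrder.Language.{u, v}} {U : Type*} [L.Structure U]

variable (L U) in
/-- `ω`-saturation: a set of formulas in one free variable, with parameters from a finite tuple, is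
realized as soon as its finite subsets are. The parameters are the variables in `Fin n`, the free
variable is the one in `Fin 1`. -/
def IsOmegaSaturated : Prop :=
  ∀ (n : ℕ) (a : Fin n → U) (p : Set (L.Formula (Fin n ⊕ Fin 1))),
    (∀ s : Finset (L.Formula (Fin n ⊕ Fin 1)), ↑s ⊆ p →
      ∃ x : U, ∀ φ ∈ s, Formula.Realize φ (Sum.elim a fun _ => x)) →
    ∃ x : U, ∀ φ ∈ p, Formula.Realize φ (Sum.elim a fun _ => x)

variable {α β : Type*}

variable (L) in
/-- An elementary limit of a filter of assignments is an assignment satisfying every formula that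
holds eventually along the filter. -/
def IsElementaryLimit (F : Filter (α → U)) (v : α → U) : Prop :=
  ∀ φ : L.Formula α, (∀ᶠ w in F, φ.Realize w) → φ.Realize v

variable (L) in
/-- The values of `v` on `t` are consistent with `v` being an elementary limit of `F`: every formula
that holds eventually is satisfied by an assignment with these values. -/
def IsElementaryLimitOn (F : Filter (α → U)) (t : Set α) (v : α → U) : Prop :=
  ∀ φ : L.Formula α, (∀ᶠ w in F, φ.Realize w) → ∃ w, φ.Realize w ∧ Set.EqOn w v t

theorem realize_congr_of_eqOn [DecidableEq α] {φ : L.Formula α} {v w : α → U}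
    (h : Set.EqOn v w φ.freeVarFinset) : φ.Realize v ↔ φ.Realize w := by
  have hv : (φ.restrictFreeVar id).Realize (fun i => v i) default ↔ φ.Realize v :=
    BoundedFormula.realize_restrictFreeVar v fun _ => rfl
  have hw : (φ.restrictFreeVar id).Realize (fun i => v i) default ↔ φ.Realize w :=
    BoundedFormula.realize_restrictFreeVar w fun i => h i.2
  exact hv.symm.trans hw

theorem definable_image_domRestrict {A : Set U} {φ : L[[A]].Formula α} [DecidableEq α]
    [Nonempty (α → U)] {t : Set α} (ht : ↑φ.freeVarFinset ⊆ t) :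
    A.Definable L (t.domRestrict '' {w | φ.Realize w}) := by
  classical
  refine ⟨φ.restrictFreeVar (Set.inclusion ht), Set.ext fun b => ⟨?_, fun hb => ?_⟩⟩
  · rintro ⟨w, hw, rfl⟩
    exact (BoundedFormula.realize_restrictFreeVar' ht).2 hw
  · let w : α → U := fun i => if hi : i ∈ t then b ⟨i, hi⟩ else Classical.arbitrary (α → U) i
    have hwb : t.domRestrict w = b := funext fun i => dif_pos i.2
    refine ⟨w, ?_, hwb⟩
    rw [← hwb] at hb
    exact (BoundedFormula.realize_restrictFreeVar' ht).1 hb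

theorem definable_image_comp [Finite β] {A : Set U} {s : Set (α → U)} (hs : A.Definable L s)
    (e : β → α) : A.Definable L ((fun w => w ∘ e) '' s) := by
  classical
  obtain ⟨φ, rfl⟩ := hs
  cases isEmpty_or_nonempty (α → U) with
  | inl _ => simp only [Set.eq_empty_of_isEmpty, Set.image_empty, Set.definable_empty]
  | inr _ =>
    let t : Set α := ↑φ.freeVarFinset ∪ Set.range e
    have : Finite t := (φ.freeVarFinset.finite_toSet.union (Set.finite_range e)).to_subtype
    let e' : β → t := fun b => ⟨e b, .inr ⟨b, rfl⟩⟩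
    have h := (definable_image_domRestrict (φ := φ) (t := t) Set.subset_union_left).image_comp e'
    rwa [Set.image_image] at h

variable {F : Filter (α → U)} {v : α → U}

theorem IsElementaryLimit.comp (h : IsElementaryLimit L F v) (e : β → α) :
    IsElementaryLimit L (F.map fun w => w ∘ e) (v ∘ e) := fun φ hφ =>
  Formula.realize_relabel.1 <| h (φ.relabel e) <|
    (Filter.eventually_map.1 hφ).mono fun _ hw => Formula.realize_relabel.2 hw

theorem isElementaryLimit_of_forall_finite
    (h : ∀ t : Set α, t.Finite → IsElementaryLimitOn L F t v) : IsElementaryLimit L F v := by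
  classical
  intro φ hφ
  obtain ⟨w, hw, hwv⟩ := h φ.freeVarFinset φ.freeVarFinset.finite_toSet φ hφ
  exact (realize_congr_of_eqOn hwv).1 hw

theorem IsElementaryLimitOn.congr {t : Set α} {v' : α → U} (h : IsElementaryLimitOn L F t v)
    (hv : Set.EqOn v v' t) : IsElementaryLimitOn L F t v' := fun φ hφ =>
  (h φ hφ).imp fun _ hw => ⟨hw.1, hw.2.trans hv⟩

theorem IsElementaryLimitOn.mono {s t : Set α} (h : IsElementaryLimitOn L F t v) (hst : s ⊆ t) :
    IsElementaryLimitOn L F s v := fun φ hφ =>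
  (h φ hφ).imp fun _ hw => ⟨hw.1, hw.2.mono hst⟩

theorem exists_isElementaryLimitOn_empty [F.NeBot] : ∃ v, IsElementaryLimitOn L F ∅ v := by
  obtain ⟨v⟩ := F.nonempty_of_neBot
  exact ⟨v, fun _ hφ => hφ.exists.imp fun w hw => ⟨hw, Set.eqOn_empty w v⟩⟩

/-- The set of values that some solution of `φ` takes along `e` is definable, so saturation applies
to the possible values of the variable `i` even though `φ` has further free variables. -/
theorem IsOmegaSaturated.exists_value (hU : IsOmegaSaturated L U) {t : Set α} (ht : t.Finite)
    (hv : IsElementaryLimitOn L F t v) (i : α) :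
    ∃ x : U, ∀ φ : L.Formula α, (∀ᶠ w in F, φ.Realize w) →
      ∃ w, φ.Realize w ∧ Set.EqOn w v t ∧ w i = x := by
  obtain ⟨n, c, -, rfl⟩ := ht.fin_param
  let e : Fin n ⊕ Fin 1 → α := Sum.elim c fun _ => i
  have hdef (φ : L.Formula α) : ∃ ψ : L.Formula (Fin n ⊕ Fin 1),
      ∀ b : Fin n ⊕ Fin 1 → U, ψ.Realize b ↔ ∃ w, φ.Realize w ∧ w ∘ e = b := by
    have hφ : (∅ : Set U).Definable L {w : α → U | φ.Realize w} :=
      Set.empty_definable_iff.2 ⟨φ, rfl⟩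
    obtain ⟨ψ, hψ⟩ := Set.empty_definable_iff.1 (definable_image_comp hφ e)
    exact ⟨ψ, fun b => (Set.ext_iff.1 hψ b).symm⟩
  choose proj hproj using hdef
  obtain ⟨x, hx⟩ := hU n (v ∘ c) (proj '' {φ | ∀ᶠ w in F, φ.Realize w}) fun s hs => by
    have hs' : ∀ ψ ∈ s, ∃ φ : L.Formula α, (∀ᶠ w in F, φ.Realize w) ∧ proj φ = ψ := hs
    choose! lift hlift hproj_lift using hs'
    obtain ⟨w, hw, hwv⟩ := hv (Formula.iInf fun ψ : s => lift ψ) (by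
      simpa only [Formula.realize_iInf, Filter.eventually_all] using fun ψ : s => hlift ψ ψ.2)
    rw [Formula.realize_iInf] at hw
    refine ⟨w i, fun ψ hψ => ?_⟩
    rw [← hproj_lift ψ hψ, hproj]
    exact ⟨w, hw ⟨ψ, hψ⟩, by rw [Sum.comp_elim, Set.eqOn_range.1 hwv]; rfl⟩
  refine ⟨x, fun φ hφ => ?_⟩
  obtain ⟨w, hw, hwe⟩ := (hproj φ _).1 (hx _ ⟨φ, hφ, rfl⟩)
  exact ⟨w, hw, Set.eqOn_range.2 (funext fun j => congr_fun hwe (.inl j)),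
    congr_fun hwe (.inr 0)⟩

theorem IsOmegaSaturated.exists_extend (hU : IsOmegaSaturated L U) {t : Set α} (ht : t.Finite)
    (hv : IsElementaryLimitOn L F t v) (i : α) :
    ∃ v', Set.EqOn v' v t ∧ IsElementaryLimitOn L F (insert i t) v' := by
  obtain ⟨x, hx⟩ := hU.exists_value ht hv i
  obtain ⟨v', -, hv't, hv'i⟩ := hx ⊤ (by simp)
  refine ⟨v', hv't, fun φ hφ => ?_⟩
  obtain ⟨w, hw, hwt, hwi⟩ := hx φ hφ
  exact ⟨w, hw, (Set.eqOn_singleton.2 (hwi.trans hv'i.symm)).union (hwt.trans hv't.symm)⟩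

theorem exists_eqOn_of_monotone {t : ℕ → Set α} (ht : Monotone t) (hcover : ∀ i, ∃ n, i ∈ t n)
    {V : ℕ → α → β} (hV : ∀ n, Set.EqOn (V (n + 1)) (V n) (t n)) :
    ∃ v, ∀ n, Set.EqOn (V n) v (t n) := by
  have hle : ∀ n m, n ≤ m → Set.EqOn (V m) (V n) (t n) := fun n m hnm => by
    induction m, hnm using Nat.le_induction with
    | base => exact Set.eqOn_refl _ _
    | succ m hnm ih => exact ((hV m).mono (ht hnm)).trans ih
  choose idx hidx using hcover
  refine ⟨fun i => V (idx i) i, fun n i hi => ?_⟩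
  exact (hle n _ (le_max_left n (idx i)) hi).symm.trans (hle (idx i) _ (le_max_right _ _) (hidx i))

theorem IsOmegaSaturated.exists_isElementaryLimit [Countable α] (hU : IsOmegaSaturated L U)
    (F : Filter (α → U)) [F.NeBot] : ∃ v, IsElementaryLimit L F v := by
  obtain ⟨v₀, hv₀⟩ := exists_isElementaryLimitOn_empty (L := L) (F := F)
  cases isEmpty_or_nonempty α with
  | inl _ =>
    exact ⟨v₀, isElementaryLimit_of_forall_finite fun t _ => Set.eq_empty_of_isEmpty t ▸ hv₀⟩
  | inr _ =>
    obtain ⟨c, hc⟩ := exists_surjective_nat α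
    let t : ℕ → Set α := fun n => c '' Set.Iio n
    have ht : Monotone t := fun m n hmn => Set.image_mono (Set.Iio_subset_Iio hmn)
    have hcover : ∀ i, ∃ n, i ∈ t n := fun i =>
      (hc i).imp' Nat.succ fun k hk => ⟨k, Nat.lt_succ_self k, hk⟩
    have hextend (n : ℕ) (V : {v // IsElementaryLimitOn L F (t n) v}) :
        ∃ V' : {v // IsElementaryLimitOn L F (t (n + 1)) v}, Set.EqOn V'.1 V.1 (t n) := by
      obtain ⟨v', hv', hlim⟩ := hU.exists_extend ((Set.finite_Iio n).image c) V.2 (c n)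
      rw [← Set.image_insert_eq, ← Order.Iio_succ_eq_insert] at hlim
      exact ⟨⟨v', hlim⟩, hv'⟩
    choose next hnext using hextend
    let V : ∀ n, {v // IsElementaryLimitOn L F (t n) v} :=
      Nat.rec ⟨v₀, hv₀.mono (by simp [t])⟩ next
    obtain ⟨v, hv⟩ := exists_eqOn_of_monotone (V := fun n => (V n).1) ht hcover
      fun n => hnext n (V n)
    refine ⟨v, isElementaryLimit_of_forall_finite fun s hs => ?_⟩
    lift s to Finset α using hs
    have hs : (s : Set α) ⊆ ⋃ n, t n := fun i _ => Set.mem_iUnion.2 (hcover i)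
    obtain ⟨n, hn⟩ := ht.directed_le.exists_mem_subset_of_finset_subset_biUnion hs
    exact ((V n).2.congr (hv n)).mono hn

end ElementaryLimit

section Amalgamation

open FirstOrder.Language.Structure FirstOrder.Language.Substructure

variable {L : FirstOrder.Language.{u, v}}

section LocallyEmbedding

variable {X U : Type*} [L.Structure X] [L.Structure U]

variable (L) in
/-- A filter of maps `X → U` is locally an embedding if on each finitely generated substructure of
`X` its members eventually agree with embeddings into `U`. -/
def IsLocallyEmbedding (F : Filter (X → U)) : Prop :=
  ∀ S : L.Substructure X, S.FG → ∀ᶠ h in F, ∃ e : S ↪[L] U, ∀ x : S, h x = e x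

variable {F : Filter (X → U)} {v : X → U}

theorem IsLocallyEmbedding.injective_of_isElementaryLimit (hF : IsLocallyEmbedding L F)
    (hv : IsElementaryLimit L F v) : Function.Injective v := by
  intro x y hxy
  by_contra hne
  suffices h : ∀ᶠ w in F, ((Term.var x).equal (Term.var y) : L.Formula X).not.Realize w from
    hv _ h (Formula.realize_equal.2 hxy)
  filter_upwards [hF _ (fg_closure (Set.toFinite {x, y}))] with w ⟨e, he⟩ hw
  have hx : x ∈ closure L {x, y} := subset_closure (by simp)
  have hy : y ∈ closure L {x, y} := subset_closure (by simp)
  have hwxy : w x = w y := Formula.realize_equal.1 hw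
  rw [he ⟨x, hx⟩, he ⟨y, hy⟩] at hwxy
  exact hne (congr_arg Subtype.val (e.injective hwxy))

theorem IsLocallyEmbedding.map_fun_of_isElementaryLimit (hF : IsLocallyEmbedding L F)
    (hv : IsElementaryLimit L F v) {n : ℕ} (f : L.Functions n) (x : Fin n → X) :
    v (funMap f x) = funMap f (v ∘ x) := by
  let φ : L.Formula X := (Term.var (funMap f x)).equal (Term.func f fun i => Term.var (x i))
  suffices h : ∀ᶠ w in F, φ.Realize w from Formula.realize_equal.1 (hv φ h)
  filter_upwards [hF _ (fg_closure (Set.finite_range x))] with w ⟨e, he⟩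
  let y : Fin n → closure L (Set.range x) := fun i => ⟨x i, subset_closure ⟨i, rfl⟩⟩
  have hwx : w ∘ x = e ∘ y := funext fun i => he (y i)
  calc w (funMap f x) = e (funMap f y) := he (funMap f y)
    _ = funMap f (w ∘ x) := by rw [e.map_fun, hwx]

theorem IsLocallyEmbedding.eventually_relMap_iff (hF : IsLocallyEmbedding L F) {n : ℕ}
    (r : L.Relations n) (x : Fin n → X) : ∀ᶠ w in F, RelMap r (w ∘ x) ↔ RelMap r x := by
  filter_upwards [hF _ (fg_closure (Set.finite_range x))] with w ⟨e, he⟩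
  let y : Fin n → closure L (Set.range x) := fun i => ⟨x i, subset_closure ⟨i, rfl⟩⟩
  have hwx : w ∘ x = e ∘ y := funext fun i => he (y i)
  rw [hwx]
  exact e.map_rel r y

theorem IsLocallyEmbedding.map_rel_of_isElementaryLimit (hF : IsLocallyEmbedding L F)
    (hv : IsElementaryLimit L F v) {n : ℕ} (r : L.Relations n) (x : Fin n → X) :
    RelMap r (v ∘ x) ↔ RelMap r x := by
  let φ : L.Formula X := r.formula fun i => Term.var (x i)
  have hφ (w : X → U) : φ.Realize w ↔ RelMap r (w ∘ x) := Formula.realize_rel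
  have hr := hF.eventually_relMap_iff r x
  refine ⟨fun h => ?_, fun h => (hφ v).1 (hv φ (hr.mono fun w hw => (hφ w).2 (hw.2 h)))⟩
  by_contra hx
  exact hv φ.not (hr.mono fun w hw hwφ => hx (hw.1 ((hφ w).1 hwφ))) ((hφ v).2 h)

theorem IsLocallyEmbedding.exists_embedding (hF : IsLocallyEmbedding L F)
    (hv : IsElementaryLimit L F v) : ∃ e : X ↪[L] U, ⇑e = v :=
  ⟨{ toFun := v
     inj' := hF.injective_of_isElementaryLimit hv
     map_fun' := hF.map_fun_of_isElementaryLimit hv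
     map_rel' := hF.map_rel_of_isElementaryLimit hv }, rfl⟩

end LocallyEmbedding

variable {U X Y Z : Type w} [L.Structure U] [L.Structure X] [L.Structure Y] [L.Structure Z]

theorem nonempty_fun_of_age_subset (h : L.age X ⊆ L.age U) : Nonempty (X → U) := by
  cases isEmpty_or_nonempty X with
  | inl _ => exact ⟨isEmptyElim⟩
  | inr hX =>
    obtain ⟨x⟩ := hX
    obtain ⟨-, ⟨e⟩⟩ := h (age.fg_substructure (fg_closure_singleton (L := L) x))
    exact ⟨fun _ => e ⟨x, subset_closure rfl⟩⟩

theorem exists_fun_eq_embedding (h : L.age X ⊆ L.age U) {S : L.Substructure X} (e : S ↪[L] U) :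
    ∃ v : X → U, ∀ x : S, v x = e x := by
  obtain ⟨v₀⟩ := nonempty_fun_of_age_subset h
  exact ⟨Function.extend Subtype.val e v₀, Subtype.val_injective.extend_apply e v₀⟩

theorem exists_embeddings_of_amalgamation_age (hU : Amalgamation (L.age U))
    (hX : L.age X ⊆ L.age U) (hY : L.age Y ⊆ L.age U) (f : Z ↪[L] X) (g : Z ↪[L] Y)
    {R : L.Substructure Z} {S : L.Substructure X} {T : L.Substructure Y}
    (hR : R.FG) (hS : S.FG) (hT : T.FG) (hRS : R.map f.toHom ≤ S) (hRT : R.map g.toHom ≤ T) :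
    ∃ (d : S ↪[L] U) (e : T ↪[L] U), ∀ z (hz : z ∈ R),
      d ⟨f z, hRS ⟨z, hz, rfl⟩⟩ = e ⟨g z, hRT ⟨z, hz, rfl⟩⟩ := by
  let fR : R ↪[L] S := (f.comp R.subtype).codRestrict S fun z => hRS ⟨z, z.2, rfl⟩
  let gR : R ↪[L] T := (g.comp R.subtype).codRestrict T fun z => hRT ⟨z, z.2, rfl⟩
  have hRU : (Bundled.of R : Bundled.{w} L.Structure) ∈ L.age U :=
    hX (f.age_subset_age (age.fg_substructure hR))
  obtain ⟨Q, d, e, ⟨-, ⟨q⟩⟩, hde⟩ := hU (.of R) (.of S) (.of T) fR gR hRU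
    (hX (age.fg_substructure hS)) (hY (age.fg_substructure hT))
  exact ⟨q.comp d, q.comp e, fun z hz => congr_arg q (DFunLike.congr_fun hde ⟨z, hz⟩)⟩

theorem exists_partial_amalgam (hU : Amalgamation (L.age U))
    (hX : L.age X ⊆ L.age U) (hY : L.age Y ⊆ L.age U) (f : Z ↪[L] X) (g : Z ↪[L] Y)
    {R : L.Substructure Z} {S : L.Substructure X} {T : L.Substructure Y}
    (hR : R.FG) (hS : S.FG) (hT : T.FG) :
    ∃ w : X ⊕ Y → U, (∃ d : S ↪[L] U, ∀ x : S, w (.inl x) = d x) ∧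
      (∃ e : T ↪[L] U, ∀ y : T, w (.inr y) = e y) ∧ ∀ z ∈ R, w (.inl (f z)) = w (.inr (g z)) := by
  obtain ⟨d, e, hde⟩ := exists_embeddings_of_amalgamation_age hU hX hY f g hR
    (hS.sup (hR.map f.toHom)) (hT.sup (hR.map g.toHom)) le_sup_right le_sup_right
  obtain ⟨h, hd⟩ := exists_fun_eq_embedding hX d
  obtain ⟨k, he⟩ := exists_fun_eq_embedding hY e
  exact ⟨Sum.elim h k, ⟨d.comp (inclusion le_sup_left), fun x => hd (inclusion le_sup_left x)⟩,
    ⟨e.comp (inclusion le_sup_left), fun y => he (inclusion le_sup_left y)⟩,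
    fun z hz => (hd _).trans ((hde z hz).trans (he _).symm)⟩

theorem exists_filter_isLocallyEmbedding (hU : Amalgamation (L.age U))
    (hX : L.age X ⊆ L.age U) (hY : L.age Y ⊆ L.age U) (f : Z ↪[L] X) (g : Z ↪[L] Y) :
    ∃ F : Filter (X ⊕ Y → U), F.NeBot ∧
      IsLocallyEmbedding L (F.map fun w => w ∘ Sum.inl) ∧
      IsLocallyEmbedding L (F.map fun w => w ∘ Sum.inr) ∧
      ∀ z, ∀ᶠ w in F, w (.inl (f z)) = w (.inr (g z)) := by
  classical
  have hpartial (i : Finset Z × Finset X × Finset Y) := exists_partial_amalgam hU hX hY f g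
    (fg_closure (L := L) i.1.finite_toSet) (fg_closure (L := L) i.2.1.finite_toSet)
    (fg_closure (L := L) i.2.2.finite_toSet)
  choose w hw_inl hw_inr hw_eq using hpartial
  refine ⟨Filter.atTop.map w, inferInstance, ?_, ?_, fun z => ?_⟩
  · rintro S ⟨t, rfl⟩
    rw [Filter.eventually_map, Filter.eventually_map]
    filter_upwards [Filter.eventually_ge_atTop (∅, t, ∅)] with i hi
    obtain ⟨d, hd⟩ := hw_inl i
    have hle : closure L (t : Set X) ≤ closure L i.2.1 := closure_mono hi.2.1
    exact ⟨d.comp (inclusion hle), fun x => hd (inclusion hle x)⟩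
  · rintro T ⟨t, rfl⟩
    rw [Filter.eventually_map, Filter.eventually_map]
    filter_upwards [Filter.eventually_ge_atTop (∅, ∅, t)] with i hi
    obtain ⟨e, he⟩ := hw_inr i
    have hle : closure L (t : Set Y) ≤ closure L i.2.2 := closure_mono hi.2.2
    exact ⟨e.comp (inclusion hle), fun y => he (inclusion hle y)⟩
  · rw [Filter.eventually_map]
    filter_upwards [Filter.eventually_ge_atTop ({z}, ∅, ∅)] with i hi
    exact hw_eq i z (subset_closure (hi.1 (Finset.mem_singleton_self z)))

theorem statement14_general [Countable X] [Countable Y] (hsat : IsOmegaSaturated L U)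
    (hU : Amalgamation (L.age U)) (hX : L.age X ⊆ L.age U) (hY : L.age Y ⊆ L.age U)
    (f : Z ↪[L] X) (g : Z ↪[L] Y) :
    ∃ (f' : X ↪[L] U) (g' : Y ↪[L] U), f'.comp f = g'.comp g := by
  obtain ⟨F, _, hF_inl, hF_inr, hF_eq⟩ := exists_filter_isLocallyEmbedding hU hX hY f g
  obtain ⟨v, hv⟩ := hsat.exists_isElementaryLimit F
  obtain ⟨f', hf'⟩ := hF_inl.exists_embedding (hv.comp Sum.inl)
  obtain ⟨g', hg'⟩ := hF_inr.exists_embedding (hv.comp Sum.inr)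
  refine ⟨f', g', Embedding.ext fun z => ?_⟩
  have hz : v (.inl (f z)) = v (.inr (g z)) := Formula.realize_equal.1 <|
    hv ((Term.var (.inl (f z))).equal (Term.var (.inr (g z)))) <|
      (hF_eq z).mono fun _ hw => Formula.realize_equal.2 hw
  rwa [Embedding.comp_apply, Embedding.comp_apply, hf', hg']

end Amalgamation

/-- Let `K` be a Fraïssé class in a countable language with Fraïssé limit
`U`. If `U` is `ω`-saturated (every finitely realized set of formulas in one free variable
with finitely many parameters from `U` is realized in `U`), then the class of countable
structures with age contained in `K` has the amalgamation property. -/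
theorem statement14 (L : FirstOrder.Language.{0, 0}) [Countable L.Symbols]
    (K : Set (Bundled.{0} L.Structure)) [IsFraisse K]
    (U : Type) [L.Structure U] [Countable U]
    (hU : IsFraisseLimit K U)
    (hsat : ∀ (n : ℕ) (a : Fin n → U) (p : Set (L.Formula (Fin n ⊕ Fin 1))),
      (∀ s : Finset (L.Formula (Fin n ⊕ Fin 1)), ↑s ⊆ p →
        ∃ x : U, ∀ φ ∈ s, Formula.Realize φ (Sum.elim a fun _ => x)) →
      ∃ x : U, ∀ φ ∈ p, Formula.Realize φ (Sum.elim a fun _ => x)) :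
    ∀ (Z X Y : Bundled.{0} L.Structure),
      Countable Z → Countable X → Countable Y →
      L.age Z ⊆ K → L.age X ⊆ K → L.age Y ⊆ K →
      ∀ (f : Z ↪[L] X) (g : Z ↪[L] Y),
        ∃ W : Bundled.{0} L.Structure, Countable W ∧ L.age W ⊆ K ∧
          ∃ (f' : X ↪[L] W) (g' : Y ↪[L] W), f'.comp f = g'.comp g := by
  intro Z X Y _ _ _ _ hX hY f g
  obtain ⟨f', g', h⟩ := statement14_general hsat (hU.age ▸ IsFraisse.amalgamation)
    (hU.age ▸ hX) (hU.age ▸ hY) f g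
  exact ⟨.of U, ‹Countable U›, hU.age.subset, f', g', h⟩
end
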